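/- Let ε, Δ, k, and G be as follows: ε ∈ (0,1), Δ sufficiently large in terms of ε, k such that (1-ε)k ln k ≥ Δ, G triangle-free with maximum degree at most Δ, and ℓ = Δ^{ε/2}. For any vertex v, let 𝛔 be the uniformly random proper k-colouring of G \ v. Then for all δ ∈ (0,1), P(ℓ_𝛔(v) < (1-δ)ℓ) ≤ 2·exp(-δ²ℓ/2). -/

import Mathlib

/-!
Let `N` be the neighbourhood of `v`; it is independent because `G` is triangle-free. Condition on
the colours outside `N`: the vertices of `N` then pick colours independently and uniformly from
fixed lists. The events that a colour is missed by all of `N` are negatively correlated, so the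
number of missed colours has Chernoff lower tails, and its mean is at least `ℓ` as long as few of
the lists are shorter than a constant `t`.

Many short lists are unlikely because the short-list events on an independent set `S` are dominated
by independent Bernoulli events of parameter `4 * t / ℓ`: a proper colouring of `S` with short lists
only is one of at most `t ^ #S` extensions, whereas colouring one more vertex multiplies the number
of proper colourings by at least `ℓ / 4`. This growth is in turn the tail bound for `δ = 1 / 2` on a
smaller vertex set, so the two are proved by induction on the set of coloured vertices.
-/

namespace TriangleFreeColoring

open Finset Fintype Function Real

section RandomLists

lemma card_nsmul_sum_piFinset_eq_sum_sum_update {ι κ M : Type*} [Fintype ι]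
    [DecidableEq ι] [AddCommMonoid M]
    (L : ι → Finset κ) (u : ι) (F : (ι → κ) → M) :
    #(L u) • ∑ f ∈ piFinset L, F f = ∑ f ∈ piFinset L, ∑ x ∈ L u, F (update f u x) := by
  have mem_resample {p : (ι → κ) × κ} (hp : p ∈ piFinset L ×ˢ L u) :
      (update p.1 u p.2, p.1 u) ∈ piFinset L ×ˢ L u := by
    obtain ⟨hf, hx⟩ := mem_product.1 hp
    refine mem_product.2 ⟨mem_piFinset.2 fun i ↦ ?_, mem_piFinset.1 hf u⟩
    rcases eq_or_ne i u with rfl | hi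
    · simpa using hx
    · simpa [hi] using mem_piFinset.1 hf i
  calc #(L u) • ∑ f ∈ piFinset L, F f = ∑ p ∈ piFinset L ×ˢ L u, F p.1 := by
        simp only [sum_product, sum_const, ← smul_sum]
    _ = ∑ p ∈ piFinset L ×ˢ L u, F (update p.1 u p.2) :=
        sum_bij' (fun p _ ↦ (update p.1 u p.2, p.1 u)) (fun p _ ↦ (update p.1 u p.2, p.1 u))
          (fun _ ↦ mem_resample) (fun _ ↦ mem_resample) (by simp) (by simp) (by simp)
    _ = ∑ f ∈ piFinset L, ∑ x ∈ L u, F (update f u x) := sum_product _ _ _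

variable {ι κ : Type*} [DecidableEq κ]

/-- The probability that no `u ∈ T` picks the colour `c` when every `u` independently picks a
uniformly random colour from its list `L u`. -/
noncomputable def missProb (L : ι → Finset κ) (T : Finset ι) (c : κ) : ℝ :=
  ∏ u ∈ T with c ∈ L u, (1 - (#(L u) : ℝ)⁻¹)

lemma missProb_nonneg (L : ι → Finset κ) (T : Finset ι) (c : κ) : 0 ≤ missProb L T c :=
  prod_nonneg fun _ _ ↦ sub_nonneg.2 (Nat.cast_inv_le_one _)

lemma missProb_le_one (L : ι → Finset κ) (T : Finset ι) (c : κ) : missProb L T c ≤ 1 :=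
  prod_le_one (fun _ _ ↦ sub_nonneg.2 (Nat.cast_inv_le_one _))
    fun _ _ ↦ sub_le_self _ (by positivity)

lemma missProb_insert [DecidableEq ι] (L : ι → Finset κ) {T : Finset ι} {u : ι} (hu : u ∉ T)
    (c : κ) :
    missProb L (insert u T) c =
      if c ∈ L u then (1 - (#(L u) : ℝ)⁻¹) * missProb L T c else missProb L T c := by
  simp only [missProb, prod_filter, prod_insert hu]
  split_ifs <;> simp

lemma one_add_sum_le_prod_one_add (s : Finset ι) {r : ι → ℝ} (hr : ∀ i ∈ s, 0 ≤ r i) :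
    1 + ∑ i ∈ s, r i ≤ ∏ i ∈ s, (1 + r i) := by
  classical
  induction s using Finset.induction_on with
  | empty => simp
  | insert a s ha ih =>
    obtain ⟨hra, hrs⟩ := (forall_mem_insert _ _ _).1 hr
    rw [sum_insert ha, prod_insert ha]
    nlinarith [ih hrs, mul_nonneg hra (sum_nonneg hrs)]

variable [Fintype κ]

lemma sum_prod_erase_le (A : Finset κ) {a : κ → ℝ} (ha₀ : ∀ c, 0 < a c) (ha₁ : ∀ c, a c ≤ 1) :
    ∑ x ∈ A, ∏ c ∈ univ.erase x, a c ≤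
      #A * ∏ c, if c ∈ A then 1 - (1 - a c) * (1 - (#A : ℝ)⁻¹) else a c := by
  rcases A.eq_empty_or_nonempty with rfl | hA
  · simp
  have hn : (#A : ℝ) ≠ 0 := by exact_mod_cast hA.card_ne_zero
  set r : κ → ℝ := fun c ↦ (a c)⁻¹ * (1 - a c) * (#A : ℝ)⁻¹
  have hr : ∀ c ∈ A, 0 ≤ r c := fun c _ ↦
    mul_nonneg (mul_nonneg (inv_nonneg.2 (ha₀ c).le) (sub_nonneg.2 (ha₁ c))) (by positivity)
  have factor (c : κ) : (if c ∈ A then 1 - (1 - a c) * (1 - (#A : ℝ)⁻¹) else a c) =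
      a c * if c ∈ A then 1 + r c else 1 := by
    have := (ha₀ c).ne'
    split_ifs
    · simp only [r]; field_simp; ring
    · rw [mul_one]
  calc ∑ x ∈ A, ∏ c ∈ univ.erase x, a c
      = ∑ x ∈ A, (∏ c, a c) * (1 + #A * r x) := sum_congr rfl fun x _ ↦ by
        have := (ha₀ x).ne'
        rw [← mul_prod_erase univ a (mem_univ x)]
        simp only [r]; field_simp; ring
    _ = #A * ((∏ c, a c) * (1 + ∑ x ∈ A, r x)) := by
        rw [← mul_sum, sum_add_distrib, ← mul_sum, sum_const, nsmul_one]; ring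
    _ ≤ #A * ((∏ c, a c) * ∏ x ∈ A, (1 + r x)) := by
        have : 0 ≤ ∏ c, a c := prod_nonneg fun c _ ↦ (ha₀ c).le
        gcongr
        exact one_add_sum_le_prod_one_add A hr
    _ = #A * ∏ c, if c ∈ A then 1 - (1 - a c) * (1 - (#A : ℝ)⁻¹) else a c := by
        simp only [factor, prod_mul_distrib, Fintype.prod_ite_mem]

variable [DecidableEq ι]

lemma prod_compl_image_insert_update {T : Finset ι} {u : ι} (hu : u ∉ T) (w : κ → ℝ) (f : ι → κ)
    (x : κ) :
    ∏ c ∈ ((insert u T).image (update f u x))ᶜ, w c = ∏ c ∈ (T.image f)ᶜ, update w x 1 c := by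
  have image_update : T.image (update f u x) = T.image f :=
    image_congr fun i hi ↦ update_of_ne (ne_of_mem_of_not_mem hi hu) _ _
  rw [image_insert, update_self, image_update, compl_insert, ← prod_erase _ (update_self x 1 w)]
  exact prod_congr rfl fun c hc ↦ (update_of_ne (ne_of_mem_erase hc) _ _).symm

variable [Fintype ι]

/-- Averaging over the choice of one further coordinate `u` turns the weight of the colour hit by
`u` into `1`, so the induction hypothesis is needed for all weights. -/
theorem sum_prod_compl_image_le (L : ι → Finset κ) (T : Finset ι) {w : κ → ℝ}
    (hw₀ : ∀ c, 0 < w c) (hw₁ : ∀ c, w c ≤ 1) :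
    ∑ f ∈ piFinset L, ∏ c ∈ (T.image f)ᶜ, w c ≤
      #(piFinset L) * ∏ c, (1 - (1 - w c) * missProb L T c) := by
  induction T using Finset.induction_on generalizing w with
  | empty => simp [missProb]
  | insert u T hu ih =>
    rcases (L u).eq_empty_or_nonempty with hLu | hLu
    · simp [piFinset_eq_empty.2 ⟨u, hLu⟩]
    set a : κ → ℝ := fun c ↦ 1 - (1 - w c) * missProb L T c
    have ha₀ (c : κ) : 0 < a c := by
      nlinarith [hw₀ c, hw₁ c, missProb_nonneg L T c, missProb_le_one L T c]
    have ha₁ (c : κ) : a c ≤ 1 :=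
      sub_le_self _ (mul_nonneg (sub_nonneg.2 (hw₁ c)) (missProb_nonneg L T c))
    have ih_update (x : κ) : ∑ f ∈ piFinset L, ∏ c ∈ (T.image f)ᶜ, update w x 1 c ≤
        #(piFinset L) * ∏ c ∈ univ.erase x, a c := by
      refine (ih ((forall_update_iff w fun _ y ↦ 0 < y).2 ⟨one_pos, fun c _ ↦ hw₀ c⟩)
        ((forall_update_iff w fun _ y ↦ y ≤ 1).2 ⟨le_rfl, fun c _ ↦ hw₁ c⟩)).trans_eq ?_
      rw [← prod_erase univ (a := x) (by simp)]
      exact congrArg _ (prod_congr rfl fun c hc ↦ by rw [update_of_ne (ne_of_mem_erase hc)])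
    refine le_of_mul_le_mul_left ?_ (Nat.cast_pos.2 hLu.card_pos : (0 : ℝ) < #(L u))
    calc (#(L u) : ℝ) * ∑ f ∈ piFinset L, ∏ c ∈ ((insert u T).image f)ᶜ, w c
        = ∑ x ∈ L u, ∑ f ∈ piFinset L, ∏ c ∈ (T.image f)ᶜ, update w x 1 c := by
          rw [← nsmul_eq_mul, card_nsmul_sum_piFinset_eq_sum_sum_update, sum_comm]
          simp only [prod_compl_image_insert_update hu]
      _ ≤ ∑ x ∈ L u, #(piFinset L) * ∏ c ∈ univ.erase x, a c := sum_le_sum fun x _ ↦ ih_update x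
      _ ≤ #(piFinset L) *
          (#(L u) * ∏ c, if c ∈ L u then 1 - (1 - a c) * (1 - (#(L u) : ℝ)⁻¹) else a c) := by
          rw [← mul_sum]
          gcongr
          exact sum_prod_erase_le (L u) ha₀ ha₁
      _ = #(L u) * (#(piFinset L) * ∏ c, (1 - (1 - w c) * missProb L (insert u T) c)) := by
          rw [mul_left_comm]
          congr! 3 with c
          rw [missProb_insert L hu]
          simp only [a]
          split_ifs <;> ring

lemma exp_neg_le_one_sub_add_sq_div_two {δ : ℝ} (hδ : 0 ≤ δ) : exp (-δ) ≤ 1 - δ + δ ^ 2 / 2 := by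
  have hpos : 0 < 1 - δ + δ ^ 2 / 2 := by nlinarith [sq_nonneg (δ - 1)]
  rw [exp_neg, inv_le_iff_one_le_mul₀ (exp_pos δ)]
  nlinarith [mul_le_mul_of_nonneg_left (quadratic_le_exp_of_nonneg hδ) hpos.le, pow_nonneg hδ 4]

/-- Chernoff's method with the weight `exp (-δ)` for every missed colour. -/
theorem card_filter_card_compl_image_lt_le (L : ι → Finset κ) (T : Finset ι) {l δ : ℝ}
    (hl : 0 ≤ l) (hδ : 0 ≤ δ) (hmean : l ≤ ∑ c, missProb L T c) :
    (#{f ∈ piFinset L | (#(T.image f)ᶜ : ℝ) < (1 - δ) * l} : ℝ) ≤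
      exp (-(δ ^ 2 * l) / 2) * #(piFinset L) := by
  have hw₁ : exp (-δ) ≤ 1 := exp_le_one_iff.2 (neg_nonpos.2 hδ)
  have markov : (#{f ∈ piFinset L | (#(T.image f)ᶜ : ℝ) < (1 - δ) * l} : ℝ) ≤
      ∑ f ∈ piFinset L, exp (δ * ((1 - δ) * l)) * ∏ _c ∈ (T.image f)ᶜ, exp (-δ) := by
    rw [← sum_boole]
    refine sum_le_sum fun f _ ↦ ?_
    rw [prod_const, ← exp_nat_mul, ← exp_add]
    split_ifs with hf
    · exact one_le_exp (by nlinarith)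
    · positivity
  have missProb_exp : ∏ c, (1 - (1 - exp (-δ)) * missProb L T c) ≤ exp (-((1 - exp (-δ)) * l)) :=
    calc ∏ c, (1 - (1 - exp (-δ)) * missProb L T c)
        ≤ ∏ c, exp (-((1 - exp (-δ)) * missProb L T c)) :=
          prod_le_prod
            (fun c _ ↦ by nlinarith [exp_pos (-δ), missProb_nonneg L T c, missProb_le_one L T c])
            fun c _ ↦ one_sub_le_exp_neg _
      _ = exp (-((1 - exp (-δ)) * ∑ c, missProb L T c)) := by
          rw [← exp_sum, mul_sum, sum_neg_distrib]
      _ ≤ exp (-((1 - exp (-δ)) * l)) := by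
          gcongr
  calc (#{f ∈ piFinset L | (#(T.image f)ᶜ : ℝ) < (1 - δ) * l} : ℝ)
      ≤ exp (δ * ((1 - δ) * l)) * ∑ f ∈ piFinset L, ∏ _c ∈ (T.image f)ᶜ, exp (-δ) :=
        markov.trans_eq (mul_sum _ _ _).symm
    _ ≤ exp (δ * ((1 - δ) * l)) * (#(piFinset L) * exp (-((1 - exp (-δ)) * l))) := by
        gcongr
        refine (sum_prod_compl_image_le L T (fun _ ↦ exp_pos _) fun _ ↦ hw₁).trans ?_
        gcongr
    _ = exp (δ * ((1 - δ) * l) + -((1 - exp (-δ)) * l)) * #(piFinset L) := by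
        rw [exp_add]; ring
    _ ≤ exp (-(δ ^ 2 * l) / 2) * #(piFinset L) := by
        gcongr
        nlinarith [mul_le_mul_of_nonneg_right (exp_neg_le_one_sub_add_sq_div_two hδ) hl]

end RandomLists

section ExpectedMissed

variable {ι κ : Type*}

lemma exp_neg_div_le_one_sub_inv {t x : ℝ} (ht : 1 < t) (htx : t ≤ x) :
    exp (-(t / (t - 1) * x⁻¹)) ≤ 1 - x⁻¹ := by
  have hx : 0 < x := by linarith
  have ht' : 0 < t - 1 := by linarith
  have hx' : 0 < x - 1 := by linarith
  have hpos : 0 < 1 - x⁻¹ := sub_pos.2 (inv_lt_one_of_one_lt₀ (by linarith))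
  rw [← le_log_iff_exp_le hpos]
  calc -(t / (t - 1) * x⁻¹) ≤ -(x / (x - 1) * x⁻¹) := by
        have : x / (x - 1) ≤ t / (t - 1) := (div_le_div_iff₀ hx' ht').2 (by linarith)
        gcongr
    _ = 1 - (1 - x⁻¹)⁻¹ := by field_simp; ring
    _ ≤ log (1 - x⁻¹) := one_sub_inv_le_log_of_pos hpos

/-- Jensen's inequality, by the tangent line at `m`. -/
lemma card_mul_exp_neg_le_sum_exp_neg (s : Finset ι) {x : ι → ℝ} {m : ℝ}
    (h : ∑ i ∈ s, x i ≤ #s * m) : #s * exp (-m) ≤ ∑ i ∈ s, exp (-x i) :=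
  calc #s * exp (-m) ≤ exp (-m) * ∑ i ∈ s, (1 - (x i - m)) := by
        rw [mul_comm]
        gcongr
        simp only [sum_sub_distrib, sum_const, nsmul_eq_mul]
        linarith
    _ = ∑ i ∈ s, exp (-m) * (1 - (x i - m)) := mul_sum _ _ _
    _ ≤ ∑ i ∈ s, exp (-m) * exp (-(x i - m)) := by
        gcongr
        exact one_sub_le_exp_neg _
    _ = ∑ i ∈ s, exp (-x i) := by
        simp only [← exp_add]; ring_nf

variable [DecidableEq κ]

lemma exp_neg_sum_inv_card_le_missProb {L : ι → Finset κ} {T : Finset ι} {c : κ} {t : ℝ}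
    (ht : 1 < t) (hL : ∀ u ∈ T, c ∈ L u → t ≤ #(L u)) :
    exp (-(t / (t - 1) * ∑ u ∈ T with c ∈ L u, (#(L u) : ℝ)⁻¹)) ≤ missProb L T c := by
  rw [mul_sum, ← sum_neg_distrib, exp_sum]
  refine prod_le_prod (fun _ _ ↦ (exp_pos _).le) fun u hu ↦ ?_
  obtain ⟨huT, hcu⟩ := mem_filter.1 hu
  exact exp_neg_div_le_one_sub_inv ht (hL u huT hcu)

lemma sum_sum_inv_card_le (L : ι → Finset κ) (T : Finset ι) (C : Finset κ) :
    ∑ c ∈ C, ∑ u ∈ T with c ∈ L u, (#(L u) : ℝ)⁻¹ ≤ #T :=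
  calc ∑ c ∈ C, ∑ u ∈ T with c ∈ L u, (#(L u) : ℝ)⁻¹
      = ∑ u ∈ T, #{c ∈ C | c ∈ L u} * (#(L u) : ℝ)⁻¹ := by
        simp only [sum_filter]
        rw [sum_comm]
        simp only [← sum_filter, sum_const, nsmul_eq_mul]
    _ ≤ ∑ u ∈ T, 1 := by
        refine sum_le_sum fun u _ ↦ mul_inv_le_one_of_le₀ ?_ (by positivity)
        exact_mod_cast card_le_card fun c hc ↦ (mem_filter.1 hc).2
    _ = #T := by simp

/-- Discard the few colours lying in a list shorter than `t`; the remaining ones are missed with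
probability at least `exp (-s c)`, where the `s c` add up to at most `t / (t - 1) * #T`. -/
theorem le_sum_missProb [Fintype κ] [Nonempty κ] {L : ι → Finset κ} {T : Finset ι} {t : ℝ}
    (ht : 1 < t) (hshort : (#{u ∈ T | (#(L u) : ℝ) < t} : ℝ) ≤ card κ / t ^ 2) :
    (1 - 1 / t) * card κ * exp (-((t / (t - 1)) ^ 2 * (#T / card κ))) ≤ ∑ c, missProb L T c := by
  have ht' : 0 < t - 1 := by linarith
  have : (0 : ℝ) < card κ := by exact_mod_cast Fintype.card_pos
  set D : Finset κ := {u ∈ T | (#(L u) : ℝ) < t}.biUnion L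
  have card_D : (#D : ℝ) ≤ card κ / t :=
    calc (#D : ℝ) ≤ ∑ u ∈ T with (#(L u) : ℝ) < t, (#(L u) : ℝ) := by exact_mod_cast card_biUnion_le
      _ ≤ ∑ u ∈ T with (#(L u) : ℝ) < t, t := sum_le_sum fun u hu ↦ (mem_filter.1 hu).2.le
      _ ≤ card κ / t ^ 2 * t := by
        rw [sum_const, nsmul_eq_mul]
        gcongr
      _ = card κ / t := by field_simp
  have card_compl_D : (1 - 1 / t) * card κ ≤ #Dᶜ := by
    rw [card_compl, Nat.cast_sub (card_le_univ D)]
    linarith [show (1 - 1 / t) * card κ = card κ - card κ / t by ring]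
  have long {c : κ} (hc : c ∈ Dᶜ) : ∀ u ∈ T, c ∈ L u → t ≤ #(L u) := fun u hu hcu ↦
    le_of_not_gt fun hlt ↦ mem_compl.1 hc (mem_biUnion.2 ⟨u, mem_filter.2 ⟨hu, hlt⟩, hcu⟩)
  have sum_le : ∑ c ∈ Dᶜ, t / (t - 1) * ∑ u ∈ T with c ∈ L u, (#(L u) : ℝ)⁻¹ ≤
      #Dᶜ * ((t / (t - 1)) ^ 2 * (#T / card κ)) :=
    calc ∑ c ∈ Dᶜ, t / (t - 1) * ∑ u ∈ T with c ∈ L u, (#(L u) : ℝ)⁻¹ ≤ t / (t - 1) * #T := by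
          rw [← mul_sum]
          gcongr
          exact sum_sum_inv_card_le L T Dᶜ
      _ = (1 - 1 / t) * card κ * ((t / (t - 1)) ^ 2 * (#T / card κ)) := by field_simp
      _ ≤ #Dᶜ * ((t / (t - 1)) ^ 2 * (#T / card κ)) := by gcongr
  calc (1 - 1 / t) * card κ * exp (-((t / (t - 1)) ^ 2 * (#T / card κ)))
      ≤ #Dᶜ * exp (-((t / (t - 1)) ^ 2 * (#T / card κ))) := by gcongr
    _ ≤ ∑ c ∈ Dᶜ, exp (-(t / (t - 1) * ∑ u ∈ T with c ∈ L u, (#(L u) : ℝ)⁻¹)) :=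
        card_mul_exp_neg_le_sum_exp_neg Dᶜ sum_le
    _ ≤ ∑ c ∈ Dᶜ, missProb L T c :=
        sum_le_sum fun c hc ↦ exp_neg_sum_inv_card_le_missProb ht (long hc)
    _ ≤ ∑ c, missProb L T c :=
        sum_le_sum_of_subset_of_nonneg (subset_univ _) fun c _ _ ↦ missProb_nonneg L T c

end ExpectedMissed

section DominatedEvents

variable {Ω ι : Type*} (P : Finset Ω) (N : Finset ι) (A : Ω → ι → Prop) [∀ ω, DecidablePred (A ω)]

lemma sum_pow_card_filter_le {p x : ℝ} (hx : 0 ≤ x)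
    (hA : ∀ S ⊆ N, (#{ω ∈ P | ∀ u ∈ S, A ω u} : ℝ) ≤ p ^ #S * #P) :
    ∑ ω ∈ P, (1 + x) ^ #{u ∈ N | A ω u} ≤ (1 + x * p) ^ #N * #P := by
  have binomial (s : Finset ι) (y : ℝ) : ∑ S ∈ s.powerset, y ^ #S = (1 + y) ^ #s := by
    simpa [add_comm] using sum_pow_mul_eq_add_pow y 1 s
  have powerset_filter_eq (ω : Ω) :
      ({u ∈ N | A ω u} : Finset ι).powerset = {S ∈ N.powerset | ∀ u ∈ S, A ω u} := by
    ext S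
    simp only [mem_powerset, mem_filter, subset_iff]
    exact forall₂_and
  calc ∑ ω ∈ P, (1 + x) ^ #{u ∈ N | A ω u}
      = ∑ ω ∈ P, ∑ S ∈ N.powerset with ∀ u ∈ S, A ω u, x ^ #S := by
        simp only [← binomial, powerset_filter_eq]
    _ = ∑ S ∈ N.powerset, x ^ #S * #{ω ∈ P | ∀ u ∈ S, A ω u} := by
        simp only [sum_filter]
        rw [sum_comm]
        simp only [← sum_filter, sum_const, nsmul_eq_mul, mul_comm]
    _ ≤ ∑ S ∈ N.powerset, x ^ #S * (p ^ #S * #P) := by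
        gcongr with S hS
        exact hA S (mem_powerset.1 hS)
    _ = (1 + x * p) ^ #N * #P := by
        simp only [← mul_assoc, ← mul_pow, ← sum_mul, binomial]

/-- Chernoff's bound at `1 + x = 3 > exp 1`. -/
lemma card_filter_lt_card_filter_le {p m : ℝ} (hp : 0 ≤ p)
    (hA : ∀ S ⊆ N, (#{ω ∈ P | ∀ u ∈ S, A ω u} : ℝ) ≤ p ^ #S * #P) :
    (#{ω ∈ P | m < #{u ∈ N | A ω u}} : ℝ) ≤ exp (2 * p * #N - m) * #P :=
  calc (#{ω ∈ P | m < #{u ∈ N | A ω u}} : ℝ)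
      ≤ ∑ ω ∈ P, exp (-m) * (1 + 2) ^ #{u ∈ N | A ω u} := by
        rw [← sum_boole]
        refine sum_le_sum fun ω _ ↦ ?_
        split_ifs with hω
        · calc (1 : ℝ) ≤ exp (-m + #{u ∈ N | A ω u}) := one_le_exp (by linarith)
            _ = exp (-m) * exp 1 ^ #{u ∈ N | A ω u} := by rw [exp_add, exp_one_pow]
            _ ≤ exp (-m) * (1 + 2) ^ #{u ∈ N | A ω u} := by
                gcongr
                linarith [exp_one_lt_three]
        · positivity
    _ ≤ exp (-m) * ((1 + 2 * p) ^ #N * #P) := by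
        rw [← mul_sum]
        gcongr
        exact sum_pow_card_filter_le P N A zero_le_two hA
    _ ≤ exp (-m) * (exp (2 * p) ^ #N * #P) := by
        gcongr
        rw [add_comm]
        exact add_one_le_exp _
    _ = exp (2 * p * #N - m) * #P := by
        rw [← exp_nat_mul, sub_eq_neg_add, exp_add]; ring_nf

end DominatedEvents

section Colorings

variable {V : Type*} (G : SimpleGraph V) [DecidableRel G.Adj]
  {κ : Type*} [Fintype κ] [DecidableEq κ]

/-- The neighbours of `v` that lie in `R`. -/
def neighborsIn (R : Finset V) (v : V) : Finset V := {w ∈ R | G.Adj v w}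

/-- The colours that the neighbours of `v` in `R` do not use under `σ`: for `R = V \ {v}`, the list
whose size is `ℓ_σ(v)`. -/
def availableColors (R : Finset V) (σ : V → κ) (v : V) : Finset κ :=
  ((neighborsIn G R v).image σ)ᶜ

variable {G}

lemma mem_neighborsIn {R : Finset V} {v w : V} : w ∈ neighborsIn G R v ↔ w ∈ R ∧ G.Adj v w :=
  mem_filter

lemma neighborsIn_subset (R : Finset V) (v : V) : neighborsIn G R v ⊆ R := filter_subset _ _

lemma card_neighborsIn_le_degree [Fintype V] (R : Finset V) (v : V) :
    #(neighborsIn G R v) ≤ G.degree v :=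
  card_le_card fun _ hw ↦ (G.mem_neighborFinset v _).2 (mem_neighborsIn.1 hw).2

lemma isIndepSet_neighborsIn (hG : G.CliqueFree 3) (R : Finset V) (v : V) :
    G.IsIndepSet (neighborsIn G R v) :=
  (G.isIndepSet_neighborSet_of_triangleFree hG v).mono fun _ hw ↦ (mem_neighborsIn.1 hw).2

lemma mem_availableColors {R : Finset V} {σ : V → κ} {v : V} {c : κ} :
    c ∈ availableColors G R σ v ↔ ∀ w ∈ R, G.Adj v w → σ w ≠ c := by
  simp [availableColors, mem_neighborsIn]

lemma availableColors_congr {R : Finset V} {σ τ : V → κ} {v : V}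
    (h : ∀ w ∈ R, G.Adj v w → σ w = τ w) : availableColors G R σ v = availableColors G R τ v := by
  unfold availableColors
  congr 1
  exact image_congr fun w hw ↦ h w (mem_neighborsIn.1 hw).1 (mem_neighborsIn.1 hw).2

lemma availableColors_eq_of_isIndepSet {R N : Finset V} {σ τ : V → κ} {v : V}
    (hN : G.IsIndepSet N) (h : ∀ u ∉ N, σ u = τ u) (hv : v ∈ N) :
    availableColors G R σ v = availableColors G R τ v :=
  availableColors_congr fun w _ hvw ↦ h w fun hw ↦ hN hv hw hvw.ne hvw

variable [DecidableEq V]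

lemma availableColors_erase (R : Finset V) (σ : V → κ) (v : V) :
    availableColors G (R.erase v) σ v = availableColors G R σ v := by
  ext c
  simp only [mem_availableColors, mem_erase]
  exact ⟨fun h w hw hvw ↦ h w ⟨hvw.ne', hw⟩ hvw, fun h w hw ↦ h w hw.2⟩

variable [Fintype V]

variable (G κ) in
/-- The maps `V → κ` that are proper colourings of the subgraph induced on `R`. The values off `R`
are arbitrary, so every proper colouring of this subgraph is counted `card κ ^ #Rᶜ` times; this
leaves probabilities unchanged. -/
def properColorings (R : Finset V) : Finset (V → κ) :=
  {σ | ∀ a ∈ R, ∀ b ∈ R, G.Adj a b → σ a ≠ σ b}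

lemma mem_properColorings {R : Finset V} {σ : V → κ} :
    σ ∈ properColorings G κ R ↔ ∀ a ∈ R, ∀ b ∈ R, G.Adj a b → σ a ≠ σ b := by
  simp [properColorings]

lemma mem_properColorings_congr {R : Finset V} {σ τ : V → κ} (h : ∀ u ∈ R, σ u = τ u) :
    σ ∈ properColorings G κ R ↔ τ ∈ properColorings G κ R := by
  simp +contextual only [mem_properColorings, h]

lemma mem_properColorings_iff_sdiff {R N : Finset V} {σ : V → κ} (hNR : N ⊆ R) :
    σ ∈ properColorings G κ R ↔
      σ ∈ properColorings G κ (R \ N) ∧ ∀ u ∈ N, σ u ∈ availableColors G R σ u := by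
  simp only [mem_properColorings, mem_availableColors, mem_sdiff]
  refine ⟨fun h ↦ ⟨fun a ha b hb ↦ h a ha.1 b hb.1,
    fun u hu w hw huw ↦ (h u (hNR hu) w hw huw).symm⟩, fun ⟨h, hav⟩ a ha b hb hab ↦ ?_⟩
  by_cases haN : a ∈ N
  · exact (hav a haN b hb hab).symm
  by_cases hbN : b ∈ N
  · exact hav b hbN a ha hab.symm
  · exact h a ⟨ha, haN⟩ b ⟨hb, hbN⟩ hab

variable (G) in
/-- The maps obtained from `σ` by giving every `u ∈ N` a colour that its neighbours in `R` do not
use. For independent `N` these choices do not interfere: a uniformly random recolouring picks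
independent uniformly random colours. -/
def recolorings (R N : Finset V) (σ : V → κ) : Finset (V → κ) :=
  piFinset fun u ↦ if u ∈ N then availableColors G R σ u else {σ u}

lemma mem_recolorings {R N : Finset V} {σ τ : V → κ} :
    τ ∈ recolorings G R N σ ↔
      (∀ u ∉ N, σ u = τ u) ∧ ∀ u ∈ N, τ u ∈ availableColors G R σ u := by
  rw [recolorings, mem_piFinset]
  refine ⟨fun h ↦ ⟨fun u hu ↦ ?_, fun u hu ↦ ?_⟩, fun ⟨hoff, hon⟩ u ↦ ?_⟩
  · simpa [hu, eq_comm] using h u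
  · simpa [hu] using h u
  · split_ifs with hu
    · exact hon u hu
    · exact mem_singleton.2 (hoff u hu).symm

lemma card_recolorings (R N : Finset V) (σ : V → κ) :
    #(recolorings G R N σ) = ∏ u ∈ N, #(availableColors G R σ u) := by
  simp [recolorings, apply_ite card, Finset.prod_ite_mem]

lemma mem_properColorings_sdiff_and_mem_recolorings {R N : Finset V} {σ τ : V → κ} (hNR : N ⊆ R)
    (hN : G.IsIndepSet N) :
    σ ∈ properColorings G κ (R \ N) ∧ τ ∈ recolorings G R N σ ↔
      (∀ u ∉ N, σ u = τ u) ∧ τ ∈ properColorings G κ R := by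
  rw [mem_recolorings, and_left_comm, mem_properColorings_iff_sdiff hNR]
  refine and_congr_right fun h ↦ and_congr
    (mem_properColorings_congr fun u hu ↦ h u (mem_sdiff.1 hu).2) (forall₂_congr fun u hu ↦ ?_)
  rw [availableColors_eq_of_isIndepSet hN h hu]

lemma card_filter_eq_off (N : Finset V) (τ : V → κ) :
    #{σ : V → κ | ∀ u ∉ N, σ u = τ u} = card κ ^ #N := by
  have : ({σ : V → κ | ∀ u ∉ N, σ u = τ u} : Finset (V → κ)) =
      piFinset fun u ↦ if u ∈ N then univ else {τ u} := by
    ext σ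
    simp only [mem_filter_univ, mem_piFinset]
    refine forall_congr' fun u ↦ ?_
    split_ifs with hu <;> simp [hu]
  rw [this, card_piFinset]
  simp [apply_ite card, Finset.prod_ite_mem]

theorem card_pow_mul_card_filter_properColorings {R N : Finset V} (hNR : N ⊆ R)
    (hN : G.IsIndepSet N) (p : (V → κ) → Prop) [DecidablePred p] :
    card κ ^ #N * #{τ ∈ properColorings G κ R | p τ} =
      ∑ σ ∈ properColorings G κ (R \ N), #{τ ∈ recolorings G R N σ | p τ} := by
  symm
  calc ∑ σ ∈ properColorings G κ (R \ N), #{τ ∈ recolorings G R N σ | p τ}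
      = ∑ τ ∈ properColorings G κ R with p τ, #{σ : V → κ | ∀ u ∉ N, σ u = τ u} := by
        simp only [Finset.card_eq_sum_ones]
        refine sum_comm' fun σ τ ↦ ?_
        simp only [mem_filter, mem_univ, true_and, ← and_assoc,
          mem_properColorings_sdiff_and_mem_recolorings hNR hN]
    _ = card κ ^ #N * #{τ ∈ properColorings G κ R | p τ} := by
        simp only [card_filter_eq_off, sum_const, smul_eq_mul, mul_comm]

lemma card_mul_card_properColorings {R : Finset V} {v : V} (hv : v ∈ R) :
    card κ * #(properColorings G κ R) =
      ∑ σ ∈ properColorings G κ (R.erase v), #(availableColors G (R.erase v) σ v) := by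
  have := card_pow_mul_card_filter_properColorings (κ := κ) (singleton_subset_iff.2 hv)
    (by simp [SimpleGraph.isIndepSet_iff] : G.IsIndepSet ({v} : Finset V)) fun _ ↦ True
  simpa [card_recolorings, availableColors_erase, sdiff_singleton_eq_erase] using this

lemma card_filter_properColorings_le [Nonempty κ] {R N : Finset V} (hNR : N ⊆ R)
    (hN : G.IsIndepSet N) {p : (V → κ) → Prop} [DecidablePred p] {c : ℝ}
    (hc : ∀ σ, (#{τ ∈ recolorings G R N σ | p τ} : ℝ) ≤ c * #(recolorings G R N σ)) :
    (#{τ ∈ properColorings G κ R | p τ} : ℝ) ≤ c * #(properColorings G κ R) := by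
  have hκ : (0 : ℝ) < (card κ : ℝ) ^ #N := by have := Fintype.card_pos (α := κ); positivity
  refine le_of_mul_le_mul_left ?_ hκ
  calc (card κ : ℝ) ^ #N * #{τ ∈ properColorings G κ R | p τ}
      = ∑ σ ∈ properColorings G κ (R \ N), (#{τ ∈ recolorings G R N σ | p τ} : ℝ) := by
        exact_mod_cast card_pow_mul_card_filter_properColorings hNR hN p
    _ ≤ ∑ σ ∈ properColorings G κ (R \ N), c * #(recolorings G R N σ) := sum_le_sum fun σ _ ↦ hc σ
    _ = (card κ : ℝ) ^ #N * (c * #(properColorings G κ R)) := by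
        rw [← mul_sum, mul_left_comm]
        congr 1
        have := card_pow_mul_card_filter_properColorings (κ := κ) hNR hN fun _ ↦ True
        simp only [filter_true] at this
        exact_mod_cast this.symm

end Colorings

section ShortLists

variable {V : Type*} [DecidableEq V]

lemma pow_card_mul_sdiff_le_of_erase_le {f : Finset V → ℝ} {b K : ℝ} (hb : 0 ≤ b) (hK : 0 ≤ K)
    {R S : Finset V} (hSR : S ⊆ R) (hf : ∀ T ⊆ R, ∀ u ∈ T, b * f (T.erase u) ≤ K * f T) :
    b ^ #S * f (R \ S) ≤ K ^ #S * f R := by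
  induction S using Finset.induction_on with
  | empty => simp
  | insert u S hu ih =>
    obtain ⟨huR, hSR⟩ := insert_subset_iff.1 hSR
    calc b ^ #(insert u S) * f (R \ insert u S) = b ^ #S * (b * f ((R \ S).erase u)) := by
          rw [card_insert_of_notMem hu, sdiff_insert, pow_succ, mul_assoc]
      _ ≤ b ^ #S * (K * f (R \ S)) := by
          refine mul_le_mul_of_nonneg_left ?_ (pow_nonneg hb _)
          exact hf _ sdiff_subset u (mem_sdiff.2 ⟨huR, hu⟩)
      _ ≤ K * (K ^ #S * f R) := by
          rw [mul_left_comm]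
          exact mul_le_mul_of_nonneg_left (ih hSR) hK
      _ = K ^ #(insert u S) * f R := by
          rw [card_insert_of_notMem hu, pow_succ', mul_assoc]

variable [Fintype V] {G : SimpleGraph V} [DecidableRel G.Adj]
  {κ : Type*} [Fintype κ] [DecidableEq κ]

lemma card_filter_short_recolorings_le {S : Finset V} (hS : G.IsIndepSet S) (R : Finset V)
    {t : ℝ} (ht : 0 ≤ t) (σ : V → κ) :
    (#{τ ∈ recolorings G R S σ | ∀ u ∈ S, (#(availableColors G R τ u) : ℝ) < t} : ℝ) ≤ t ^ #S := by
  rcases Finset.eq_empty_or_nonempty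
    {τ ∈ recolorings G R S σ | ∀ u ∈ S, (#(availableColors G R τ u) : ℝ) < t} with h | ⟨τ, hτ⟩
  · rw [h]
    simpa using pow_nonneg ht _
  obtain ⟨hτ, hshort⟩ := mem_filter.1 hτ
  have lt_of_mem (u : V) (hu : u ∈ S) : (#(availableColors G R σ u) : ℝ) < t := by
    rw [availableColors_eq_of_isIndepSet hS (mem_recolorings.1 hτ).1 hu]
    exact hshort u hu
  calc (#{τ ∈ recolorings G R S σ | ∀ u ∈ S, (#(availableColors G R τ u) : ℝ) < t} : ℝ)
      ≤ ∏ u ∈ S, (#(availableColors G R σ u) : ℝ) := by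
        exact_mod_cast (card_filter_le _ _).trans_eq (card_recolorings R S σ)
    _ ≤ ∏ _u ∈ S, t := prod_le_prod (fun _ _ ↦ Nat.cast_nonneg _) fun u hu ↦ (lt_of_mem u hu).le
    _ = t ^ #S := prod_const t

lemma card_pow_mul_card_filter_short_le {R S : Finset V} (hSR : S ⊆ R) (hS : G.IsIndepSet S)
    {t : ℝ} (ht : 0 ≤ t) :
    (card κ : ℝ) ^ #S *
        #{τ ∈ properColorings G κ R | ∀ u ∈ S, (#(availableColors G R τ u) : ℝ) < t} ≤
      t ^ #S * #(properColorings G κ (R \ S)) := by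
  rw [mul_comm (t ^ #S), ← nsmul_eq_mul]
  calc _ = ∑ σ ∈ properColorings G κ (R \ S),
        (#{τ ∈ recolorings G R S σ | ∀ u ∈ S, (#(availableColors G R τ u) : ℝ) < t} : ℝ) := by
        exact_mod_cast card_pow_mul_card_filter_properColorings hSR hS _
    _ ≤ _ := sum_le_card_nsmul _ _ _ fun σ _ ↦ card_filter_short_recolorings_le hS R ht σ

lemma card_filter_forall_short_le [Nonempty κ] {R S : Finset V} (hSR : S ⊆ R)
    (hS : G.IsIndepSet S) {t b : ℝ} (ht : 0 ≤ t) (hb : 0 < b)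
    (hgrowth : ∀ T ⊆ R, ∀ u ∈ T,
      b * #(properColorings G κ (T.erase u)) ≤ card κ * #(properColorings G κ T)) :
    (#{τ ∈ properColorings G κ R | ∀ u ∈ S, (#(availableColors G R τ u) : ℝ) < t} : ℝ) ≤
      (t / b) ^ #S * #(properColorings G κ R) := by
  have hκ : (0 : ℝ) < card κ := by exact_mod_cast Fintype.card_pos
  rw [div_pow, div_mul_eq_mul_div, le_div_iff₀' (by positivity)]
  refine le_of_mul_le_mul_left ?_ (pow_pos hκ #S)
  calc (card κ : ℝ) ^ #S * (b ^ #S *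
        #{τ ∈ properColorings G κ R | ∀ u ∈ S, (#(availableColors G R τ u) : ℝ) < t})
      ≤ b ^ #S * (t ^ #S * #(properColorings G κ (R \ S))) := by
        rw [mul_left_comm]
        refine mul_le_mul_of_nonneg_left ?_ (pow_nonneg hb.le _)
        exact card_pow_mul_card_filter_short_le hSR hS ht
    _ ≤ t ^ #S * ((card κ : ℝ) ^ #S * #(properColorings G κ R)) := by
        rw [mul_left_comm]
        refine mul_le_mul_of_nonneg_left ?_ (pow_nonneg ht _)
        exact pow_card_mul_sdiff_le_of_erase_le
          (f := fun T ↦ (#(properColorings G κ T) : ℝ)) hb.le hκ.le hSR hgrowth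
    _ = (card κ : ℝ) ^ #S * (t ^ #S * #(properColorings G κ R)) := mul_left_comm _ _ _

end ShortLists

section Concentration

/-- The numerical conditions on the number `k` of colours, the degree bound `Δ` and the list size
`ℓ` that the argument needs; lists with fewer than `t` colours are regarded as short. -/
structure IsRegime (k Δ t ℓ : ℝ) : Prop where
  one_lt : 1 < t
  sixteen_le : 16 ≤ ℓ
  few_short : 8 * t * Δ / ℓ + ℓ / 2 ≤ k / t ^ 2
  le_mean : ℓ ≤ (1 - 1 / t) * k * exp (-((t / (t - 1)) ^ 2 * (Δ / k)))

lemma IsRegime.nonempty {κ : Type*} [Fintype κ] {Δ t ℓ : ℝ} (h : IsRegime (card κ) Δ t ℓ) :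
    Nonempty κ := by
  by_contra hκ
  have := h.le_mean
  simp only [not_nonempty_iff.1 hκ, Fintype.card_eq_zero, Nat.cast_zero] at this
  linarith [h.sixteen_le]

variable {V : Type*} [DecidableEq V] [Fintype V] {G : SimpleGraph V} [DecidableRel G.Adj]
  {κ : Type*} [Fintype κ] [DecidableEq κ] {Δ t ℓ : ℝ}

lemma card_filter_recolorings_le (hreg : IsRegime (card κ) Δ t ℓ) {R : Finset V} {v : V}
    (hΔ : (G.degree v : ℝ) ≤ Δ) {σ : V → κ} {δ : ℝ} (hδ : 0 ≤ δ)
    (hfew : (#{u ∈ neighborsIn G R v | (#(availableColors G R σ u) : ℝ) < t} : ℝ) ≤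
      card κ / t ^ 2) :
    (#{τ ∈ recolorings G R (neighborsIn G R v) σ |
        (#(availableColors G R τ v) : ℝ) < (1 - δ) * ℓ} : ℝ) ≤
      exp (-(δ ^ 2 * ℓ) / 2) * #(recolorings G R (neighborsIn G R v) σ) := by
  have := hreg.nonempty
  set N := neighborsIn G R v
  have card_N : (#N : ℝ) ≤ Δ := (Nat.cast_le.2 (card_neighborsIn_le_degree R v)).trans hΔ
  have inv_t : 0 ≤ 1 - 1 / t :=
    sub_nonneg.2 ((div_le_one (by linarith [hreg.one_lt])).2 hreg.one_lt.le)
  refine card_filter_card_compl_image_lt_le _ N (by linarith [hreg.sixteen_le]) hδ ?_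
  calc ℓ ≤ (1 - 1 / t) * card κ * exp (-((t / (t - 1)) ^ 2 * (Δ / card κ))) := hreg.le_mean
    _ ≤ (1 - 1 / t) * card κ * exp (-((t / (t - 1)) ^ 2 * (#N / card κ))) := by gcongr
    _ ≤ _ := le_sum_missProb hreg.one_lt ?_
  refine le_of_eq_of_le (congrArg _ (congrArg _ (filter_congr fun u hu ↦ ?_))) hfew
  rw [if_pos hu]

lemma card_filter_few_short_le (hreg : IsRegime (card κ) Δ t ℓ) (hG : G.CliqueFree 3)
    (R : Finset V) {v : V} (hΔ : (G.degree v : ℝ) ≤ Δ) {δ : ℝ} (hδ : 0 ≤ δ) :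
    (#{τ ∈ properColorings G κ R |
        (#{u ∈ neighborsIn G R v | (#(availableColors G R τ u) : ℝ) < t} : ℝ) ≤ card κ / t ^ 2 ∧
          (#(availableColors G R τ v) : ℝ) < (1 - δ) * ℓ} : ℝ) ≤
      exp (-(δ ^ 2 * ℓ) / 2) * #(properColorings G κ R) := by
  have := hreg.nonempty
  have hN := isIndepSet_neighborsIn hG R v
  refine card_filter_properColorings_le (neighborsIn_subset R v) hN fun σ ↦ ?_
  have same_short {τ : V → κ} (hτ : τ ∈ recolorings G R (neighborsIn G R v) σ) :
      ({u ∈ neighborsIn G R v | (#(availableColors G R τ u) : ℝ) < t} : Finset V) =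
        {u ∈ neighborsIn G R v | (#(availableColors G R σ u) : ℝ) < t} :=
    filter_congr fun u hu ↦ by
      rw [availableColors_eq_of_isIndepSet hN (mem_recolorings.1 hτ).1 hu]
  by_cases hfew : (#{u ∈ neighborsIn G R v | (#(availableColors G R σ u) : ℝ) < t} : ℝ) ≤
      card κ / t ^ 2
  · refine le_trans ?_ (card_filter_recolorings_le hreg hΔ hδ hfew)
    exact_mod_cast card_le_card fun τ hτ ↦
      mem_filter.2 ((mem_filter.1 hτ).imp_right And.right)
  · rw [filter_false_of_mem fun τ hτ h ↦ hfew (same_short hτ ▸ h.1)]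
    rw [Finset.card_empty, Nat.cast_zero]
    positivity

lemma card_filter_many_short_le (hreg : IsRegime (card κ) Δ t ℓ) (hG : G.CliqueFree 3)
    {R : Finset V} {v : V} (hΔ : (G.degree v : ℝ) ≤ Δ)
    (hgrowth : ∀ T ⊆ R, ∀ u ∈ T,
      ℓ / 4 * #(properColorings G κ (T.erase u)) ≤ card κ * #(properColorings G κ T)) :
    (#{τ ∈ properColorings G κ R |
        card κ / t ^ 2 < #{u ∈ neighborsIn G R v | (#(availableColors G R τ u) : ℝ) < t}} : ℝ) ≤
      exp (-ℓ / 2) * #(properColorings G κ R) := by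
  have := hreg.nonempty
  have hℓ : 0 < ℓ := by linarith [hreg.sixteen_le]
  have ht : 0 < t := by linarith [hreg.one_lt]
  have short_le {S : Finset V} (hS : S ⊆ neighborsIn G R v) :
      (#{τ ∈ properColorings G κ R | ∀ u ∈ S, (#(availableColors G R τ u) : ℝ) < t} : ℝ) ≤
        (t / (ℓ / 4)) ^ #S * #(properColorings G κ R) :=
    card_filter_forall_short_le (hS.trans (neighborsIn_subset R v))
      ((isIndepSet_neighborsIn hG R v).mono (coe_subset.2 hS)) ht.le (by positivity) hgrowth
  refine (card_filter_lt_card_filter_le (p := t / (ℓ / 4)) _ _ _ (by positivity)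
    fun S hS ↦ by convert short_le hS).trans ?_
  gcongr
  have card_N : (#(neighborsIn G R v) : ℝ) ≤ Δ :=
    (Nat.cast_le.2 (card_neighborsIn_le_degree R v)).trans hΔ
  calc 2 * (t / (ℓ / 4)) * #(neighborsIn G R v) - card κ / t ^ 2
      ≤ 2 * (t / (ℓ / 4)) * Δ - card κ / t ^ 2 := by gcongr
    _ = 8 * t * Δ / ℓ - card κ / t ^ 2 := by ring
    _ ≤ -ℓ / 2 := by linarith [hreg.few_short]

lemma card_filter_availableColors_lt_le_of_growth (hreg : IsRegime (card κ) Δ t ℓ)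
    (hG : G.CliqueFree 3) {R : Finset V} {v : V} (hΔ : (G.degree v : ℝ) ≤ Δ)
    (hgrowth : ∀ T ⊆ R, ∀ u ∈ T,
      ℓ / 4 * #(properColorings G κ (T.erase u)) ≤ card κ * #(properColorings G κ T))
    {δ : ℝ} (hδ₀ : 0 ≤ δ) (hδ₁ : δ ≤ 1) :
    (#{τ ∈ properColorings G κ R | (#(availableColors G R τ v) : ℝ) < (1 - δ) * ℓ} : ℝ) ≤
      2 * exp (-(δ ^ 2 * ℓ) / 2) * #(properColorings G κ R) := by
  have split : ({τ ∈ properColorings G κ R | (#(availableColors G R τ v) : ℝ) < (1 - δ) * ℓ}) ⊆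
      {τ ∈ properColorings G κ R |
        (#{u ∈ neighborsIn G R v | (#(availableColors G R τ u) : ℝ) < t} : ℝ) ≤ card κ / t ^ 2 ∧
          (#(availableColors G R τ v) : ℝ) < (1 - δ) * ℓ} ∪
      {τ ∈ properColorings G κ R |
        card κ / t ^ 2 < #{u ∈ neighborsIn G R v | (#(availableColors G R τ u) : ℝ) < t}} := by
    intro τ hτ
    rw [mem_filter] at hτ
    rw [mem_union, mem_filter, mem_filter]
    exact (le_or_gt _ _).imp (fun h ↦ ⟨hτ.1, h, hτ.2⟩) fun h ↦ ⟨hτ.1, h⟩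
  have exp_le : exp (-ℓ / 2) ≤ exp (-(δ ^ 2 * ℓ) / 2) := by
    have : 0 ≤ ℓ := by linarith [hreg.sixteen_le]
    gcongr
    exact mul_le_of_le_one_left this (pow_le_one₀ hδ₀ hδ₁)
  calc (#{τ ∈ properColorings G κ R | (#(availableColors G R τ v) : ℝ) < (1 - δ) * ℓ} : ℝ)
      ≤ exp (-(δ ^ 2 * ℓ) / 2) * #(properColorings G κ R) +
          exp (-ℓ / 2) * #(properColorings G κ R) := by
        refine le_trans ?_ (add_le_add (card_filter_few_short_le hreg hG R hΔ hδ₀)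
          (card_filter_many_short_le hreg hG hΔ hgrowth))
        exact_mod_cast (card_le_card split).trans (card_union_le _ _)
    _ ≤ exp (-(δ ^ 2 * ℓ) / 2) * #(properColorings G κ R) +
          exp (-(δ ^ 2 * ℓ) / 2) * #(properColorings G κ R) := by gcongr
    _ = 2 * exp (-(δ ^ 2 * ℓ) / 2) * #(properColorings G κ R) := by ring

lemma card_properColorings_erase_le (hreg : IsRegime (card κ) Δ t ℓ) (hG : G.CliqueFree 3)
    (hΔ : ∀ v, (G.degree v : ℝ) ≤ Δ) {R : Finset V} {v : V} (hv : v ∈ R) :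
    ℓ / 4 * #(properColorings G κ (R.erase v)) ≤ card κ * #(properColorings G κ R) := by
  induction R using Finset.strongInduction generalizing v with
  | H R ih =>
    set R' := R.erase v
    have hR' : R' ⊂ R := erase_ssubset hv
    set Z : ℝ := (#(properColorings G κ R') : ℝ)
    have card_short : (#{σ ∈ properColorings G κ R' |
        (#(availableColors G R' σ v) : ℝ) < (1 - 1 / 2) * ℓ} : ℝ) ≤ Z / 2 := by
      have exp_le : exp (-((1 / 2) ^ 2 * ℓ) / 2) ≤ 1 / 4 :=
        calc exp (-((1 / 2) ^ 2 * ℓ) / 2) ≤ exp (-1 + -1) :=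
              exp_le_exp.2 (by linarith [hreg.sixteen_le])
          _ ≤ 1 / 2 * (1 / 2) := by
              rw [exp_add]
              gcongr <;> exact exp_neg_one_lt_half.le
          _ = 1 / 4 := by norm_num
      calc _ ≤ 2 * exp (-((1 / 2) ^ 2 * ℓ) / 2) * Z :=
            card_filter_availableColors_lt_le_of_growth hreg hG (hΔ v)
              (fun T hT _ hu ↦ ih T (hT.trans_ssubset hR') hu) one_half_pos.le one_half_lt_one.le
        _ ≤ 2 * (1 / 4) * Z := by gcongr
        _ = Z / 2 := by ring
    calc ℓ / 4 * Z ≤ ℓ / 2 * (Z - #{σ ∈ properColorings G κ R' |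
            (#(availableColors G R' σ v) : ℝ) < (1 - 1 / 2) * ℓ}) := by
          nlinarith [hreg.sixteen_le]
      _ = ∑ σ ∈ properColorings G κ R',
            (ℓ / 2 - if (#(availableColors G R' σ v) : ℝ) < (1 - 1 / 2) * ℓ then ℓ / 2 else 0) := by
          rw [sum_sub_distrib, ← sum_filter, sum_const, sum_const, nsmul_eq_mul, nsmul_eq_mul]
          ring
      _ ≤ ∑ σ ∈ properColorings G κ R', (#(availableColors G R' σ v) : ℝ) := by
          refine sum_le_sum fun σ _ ↦ ?_
          split_ifs
          · simp
          · linarith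
      _ = card κ * #(properColorings G κ R) := by
          exact_mod_cast (card_mul_card_properColorings hv).symm

theorem card_filter_availableColors_lt_le (hreg : IsRegime (card κ) Δ t ℓ) (hG : G.CliqueFree 3)
    (hΔ : ∀ v, (G.degree v : ℝ) ≤ Δ) (R : Finset V) (v : V) {δ : ℝ} (hδ₀ : 0 ≤ δ) (hδ₁ : δ ≤ 1) :
    (#{τ ∈ properColorings G κ R | (#(availableColors G R τ v) : ℝ) < (1 - δ) * ℓ} : ℝ) ≤
      2 * exp (-(δ ^ 2 * ℓ) / 2) * #(properColorings G κ R) :=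
  card_filter_availableColors_lt_le_of_growth hreg hG (hΔ v)
    (fun _ _ _ hu ↦ card_properColorings_erase_le hreg hG hΔ hu) hδ₀ hδ₁

end Concentration

section DeletedVertex

variable {V : Type*} [DecidableEq V] [Fintype V] {κ : Type*} [Fintype κ]

lemma card_filter_restrict (v : V) (p : ({u : V // u ≠ v} → κ) → Prop) [DecidablePred p] :
    #{σ : V → κ | p fun u ↦ σ u} = card κ * #{τ | p τ} := by
  classical
  have restrict_symm (c : κ) (τ : {u : V // u ≠ v} → κ) :
      (fun u : {u : V // u ≠ v} ↦ (Equiv.funSplitAt v κ).symm (c, τ) u) = τ := by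
    ext u
    simp [u.2]
  rw [card_filter, ← Equiv.sum_comp (Equiv.funSplitAt v κ).symm, Fintype.sum_prod_type]
  simp only [restrict_symm, ← card_filter, sum_const, card_univ, smul_eq_mul]

variable [DecidableEq κ] {G : SimpleGraph V} [DecidableRel G.Adj] {Δ t ℓ : ℝ}

theorem card_filter_unused_lt_le (hreg : IsRegime (card κ) Δ t ℓ) (hG : G.CliqueFree 3)
    (hΔ : ∀ v, (G.degree v : ℝ) ≤ Δ) (v : V) {δ : ℝ} (hδ₀ : 0 ≤ δ) (hδ₁ : δ ≤ 1) :
    (#{σ : {u : V // u ≠ v} → κ |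
        (∀ a b : {u : V // u ≠ v}, G.Adj a.1 b.1 → σ a ≠ σ b) ∧
          (#{c : κ | ∀ u : {u : V // u ≠ v}, G.Adj u.1 v → σ u ≠ c} : ℝ) < (1 - δ) * ℓ} : ℝ) ≤
      2 * exp (-(δ ^ 2 * ℓ) / 2) *
        #{σ : {u : V // u ≠ v} → κ | ∀ a b : {u : V // u ≠ v}, G.Adj a.1 b.1 → σ a ≠ σ b} := by
  have := hreg.nonempty
  have proper_iff (σ : V → κ) : σ ∈ properColorings G κ (univ.erase v) ↔
      ∀ a b : {u : V // u ≠ v}, G.Adj a.1 b.1 → σ a ≠ σ b := by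
    simp [mem_properColorings]
  have availableColors_eq (σ : V → κ) : availableColors G (univ.erase v) σ v =
      ({c : κ | ∀ u : {u : V // u ≠ v}, G.Adj u.1 v → σ u ≠ c} : Finset κ) := by
    ext c
    simp [mem_availableColors, G.adj_comm]
  have card_proper : #(properColorings G κ (univ.erase v)) = card κ *
      #{σ : {u : V // u ≠ v} → κ | ∀ a b : {u : V // u ≠ v}, G.Adj a.1 b.1 → σ a ≠ σ b} := by
    rw [← card_filter_restrict, ← filter_univ_mem (properColorings G κ (univ.erase v))]
    simp only [proper_iff]
  have card_bad : #{σ ∈ properColorings G κ (univ.erase v) |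
        (#(availableColors G (univ.erase v) σ v) : ℝ) < (1 - δ) * ℓ} = card κ *
      #{σ : {u : V // u ≠ v} → κ | (∀ a b : {u : V // u ≠ v}, G.Adj a.1 b.1 → σ a ≠ σ b) ∧
        (#{c : κ | ∀ u : {u : V // u ≠ v}, G.Adj u.1 v → σ u ≠ c} : ℝ) < (1 - δ) * ℓ} := by
    rw [← card_filter_restrict]
    congr 1
    ext σ
    simp only [mem_filter, mem_univ, true_and, proper_iff, availableColors_eq]
  have tail := card_filter_availableColors_lt_le (κ := κ) hreg hG hΔ (univ.erase v) v hδ₀ hδ₁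
  rw [card_proper, card_bad, Nat.cast_mul, Nat.cast_mul, mul_left_comm] at tail
  exact le_of_mul_le_mul_left tail (by exact_mod_cast Fintype.card_pos)

end DeletedVertex

section LargeDegree

lemma rpow_one_sub_two_mul_le_of_le_mul_log {s D k : ℝ} (hs : 0 < s) (hD : 1 ≤ D)
    (hDs : s⁻¹ ≤ D ^ s) (hk : 0 ≤ k) (h : D ≤ k * log k) : D ^ (1 - 2 * s) ≤ k := by
  have hD₀ : 0 < D := by linarith
  have hk₀ : 0 < k := hk.lt_of_ne fun h0 ↦ by simp [← h0] at h; linarith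
  have rpow_le : D ^ (1 - s) ≤ k ^ (1 + s) := by
    refine le_of_mul_le_mul_right ?_ (rpow_pos_of_pos hD₀ s)
    calc D ^ (1 - s) * D ^ s = D := by rw [← rpow_add hD₀, sub_add_cancel, rpow_one]
      _ ≤ k * (k ^ s / s) := h.trans (by gcongr; exact log_le_rpow_div hk hs)
      _ = k ^ (1 + s) * s⁻¹ := by rw [rpow_add hk₀, rpow_one]; ring
      _ ≤ k ^ (1 + s) * D ^ s := by gcongr
  rw [← rpow_le_rpow_iff (by positivity) hk (by positivity : 0 < 1 + s)]
  calc (D ^ (1 - 2 * s)) ^ (1 + s) = D ^ ((1 - 2 * s) * (1 + s)) := (rpow_mul hD₀.le _ _).symm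
    _ ≤ D ^ (1 - s) := rpow_le_rpow_of_exponent_le hD (by nlinarith)
    _ ≤ k ^ (1 + s) := rpow_le

lemma few_short_of_rpow_le {ε D k t : ℝ} (hD : 0 < D) (ht : 0 < t)
    (ht₃ : 16 * t ^ 3 ≤ D ^ (3 * ε / 8)) (ht₂ : t ^ 2 ≤ D ^ (1 - 5 * ε / 8))
    (hk : D ^ (1 - ε / 8) ≤ k) :
    8 * t * D / D ^ (ε / 2) + D ^ (ε / 2) / 2 ≤ k / t ^ 2 := by
  have first : 8 * t * D / D ^ (ε / 2) ≤ k / t ^ 2 / 2 := by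
    rw [div_div, div_le_div_iff₀ (by positivity) (by positivity)]
    calc 8 * t * D * (t ^ 2 * 2) = 16 * t ^ 3 * D ^ (1 : ℝ) := by rw [rpow_one]; ring
      _ ≤ D ^ (3 * ε / 8) * D ^ (1 : ℝ) := by gcongr
      _ = D ^ (1 - ε / 8) * D ^ (ε / 2) := by
          rw [← rpow_add hD, ← rpow_add hD]; ring_nf
      _ ≤ k * D ^ (ε / 2) := by gcongr
  have second : D ^ (ε / 2) ≤ k / t ^ 2 := by
    rw [le_div_iff₀ (by positivity)]
    calc D ^ (ε / 2) * t ^ 2 ≤ D ^ (ε / 2) * D ^ (1 - 5 * ε / 8) := by gcongr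
      _ = D ^ (1 - ε / 8) := by rw [← rpow_add hD]; ring_nf
      _ ≤ k := hk
  linarith

lemma two_mul_rpow_le_mul_exp_neg {ε D k : ℝ} (hε₀ : 0 < ε) (hε₁ : ε < 1) (hD : 1 ≤ D)
    (htwo : 2 ≤ D ^ (5 * ε / 32)) (hk : D ^ (1 - ε / 8) ≤ k) (hDk : D ≤ (1 - ε) * k * log k) :
    2 * D ^ (ε / 2) ≤ k * exp (-((1 + ε / 16) ^ 2 * (D / k))) := by
  have hD₀ : 0 < D := by linarith
  have hk₁ : 1 ≤ k := (one_le_rpow hD (by linarith)).trans hk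
  have hk₀ : 0 < k := by linarith
  have hlog : 0 ≤ log k := log_nonneg hk₁
  have exponent_le : (1 + ε / 16) ^ 2 * (D / k) ≤ (1 - 3 * ε / 4) * log k :=
    calc (1 + ε / 16) ^ 2 * (D / k) ≤ (1 + ε / 4) * ((1 - ε) * log k) := by
          gcongr
          · nlinarith
          · rw [div_le_iff₀ hk₀]; linarith
      _ = (1 - 3 * ε / 4 - ε ^ 2 / 4) * log k := by ring
      _ ≤ (1 - 3 * ε / 4) * log k := mul_le_mul_of_nonneg_right (by nlinarith) hlog
  calc 2 * D ^ (ε / 2) ≤ D ^ (5 * ε / 32) * D ^ (ε / 2) := by gcongr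
    _ = D ^ (5 * ε / 32 + ε / 2) := (rpow_add hD₀ _ _).symm
    _ ≤ D ^ ((1 - ε / 8) * (3 * ε / 4)) := rpow_le_rpow_of_exponent_le hD (by nlinarith)
    _ = (D ^ (1 - ε / 8)) ^ (3 * ε / 4) := rpow_mul hD₀.le _ _
    _ ≤ k ^ (3 * ε / 4) := by gcongr
    _ = k * exp (-((1 - 3 * ε / 4) * log k)) := by
        rw [rpow_def_of_pos hk₀, ← exp_log hk₀, ← exp_add, log_exp]; ring_nf
    _ ≤ k * exp (-((1 + ε / 16) ^ 2 * (D / k))) := by gcongr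

theorem eventually_isRegime {ε : ℝ} (hε₀ : 0 < ε) (hε₁ : ε < 1) :
    ∀ᶠ D : ℝ in Filter.atTop, ∀ k : ℝ, 0 ≤ k → D ≤ (1 - ε) * k * log k →
      IsRegime k D (1 + 16 / ε) (D ^ (ε / 2)) := by
  have rpow_ge (C : ℝ) {a : ℝ} (ha : 0 < a) : ∀ᶠ D : ℝ in Filter.atTop, C ≤ D ^ a :=
    (tendsto_rpow_atTop ha).eventually_ge_atTop C
  set t : ℝ := 1 + 16 / ε with ht
  have ht₂ : 2 ≤ t := by
    have : 1 ≤ 16 / ε := (one_le_div hε₀).2 (by linarith)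
    linarith
  have div_sub_one : t / (t - 1) = 1 + ε / 16 := by
    rw [ht]; field_simp; ring
  filter_upwards [Filter.eventually_ge_atTop 1, rpow_ge (ε / 16)⁻¹ (a := ε / 16) (by linarith),
    rpow_ge 16 (a := ε / 2) (by linarith), rpow_ge (16 * t ^ 3) (a := 3 * ε / 8) (by linarith),
    rpow_ge (t ^ 2) (a := 1 - 5 * ε / 8) (by linarith), rpow_ge 2 (a := 5 * ε / 32) (by linarith)]
    with D hD hlog hsixteen hcube hsq htwo k hk hDk
  have rpow_le_k : D ^ (1 - ε / 8) ≤ k := by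
    have : D ≤ k * log k := by nlinarith
    convert rpow_one_sub_two_mul_le_of_le_mul_log (by positivity) hD hlog hk this using 2
    ring
  refine ⟨by linarith, hsixteen, few_short_of_rpow_le (by linarith) (by linarith) hcube hsq
    rpow_le_k, ?_⟩
  have := two_mul_rpow_le_mul_exp_neg hε₀ hε₁ hD htwo rpow_le_k hDk
  rw [div_sub_one]
  have : 1 / t ≤ 1 / 2 := one_div_le_one_div_of_le two_pos ht₂
  calc D ^ (ε / 2) ≤ 1 / 2 * (k * exp (-((1 + ε / 16) ^ 2 * (D / k)))) := by linarith
    _ ≤ (1 - 1 / t) * (k * exp (-((1 + ε / 16) ^ 2 * (D / k)))) := by gcongr; linarith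
    _ = _ := (mul_assoc _ _ _).symm

end LargeDegree

end TriangleFreeColoring

theorem stmt_17 (ε : ℝ) (hε0 : 0 < ε) (hε1 : ε < 1) :
    ∃ Δ₀ : ℕ, ∀ Δ : ℕ, Δ₀ ≤ Δ → ∀ k : ℕ, (Δ : ℝ) ≤ (1 - ε) * k * Real.log k →
    ∀ (V : Type) [Fintype V] [DecidableEq V] (G : SimpleGraph V) [DecidableRel G.Adj],
      G.CliqueFree 3 → G.maxDegree ≤ Δ → ∀ v : V, ∀ δ : ℝ, 0 < δ → δ < 1 →
      ((Finset.univ.filter (fun σ : {u : V // u ≠ v} → Fin k =>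
            (∀ a b : {u : V // u ≠ v}, G.Adj a.1 b.1 → σ a ≠ σ b) ∧
              ((Finset.univ.filter (fun c : Fin k =>
                ∀ u : {u : V // u ≠ v}, G.Adj u.1 v → σ u ≠ c)).card : ℝ) <
                (1 - δ) * (Δ : ℝ) ^ (ε / 2))).card : ℝ) /
          ((Finset.univ.filter (fun σ : {u : V // u ≠ v} → Fin k =>
            ∀ a b : {u : V // u ≠ v}, G.Adj a.1 b.1 → σ a ≠ σ b)).card : ℝ) ≤
        2 * Real.exp (-(δ ^ 2 * (Δ : ℝ) ^ (ε / 2)) / 2) := by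
  obtain ⟨Δ₀, hΔ₀⟩ := Filter.eventually_atTop.1
    (tendsto_natCast_atTop_atTop.eventually (TriangleFreeColoring.eventually_isRegime hε0 hε1))
  refine ⟨Δ₀, fun Δ hΔ k hk V _ _ G _ hG hdeg v δ hδ0 hδ1 ↦ ?_⟩
  have hreg := hΔ₀ Δ hΔ k k.cast_nonneg hk
  have degree_le (w : V) : (G.degree w : ℝ) ≤ Δ := by
    exact_mod_cast (G.degree_le_maxDegree w).trans hdeg
  rw [← Fintype.card_fin k] at hreg
  refine div_le_of_le_mul₀ (Nat.cast_nonneg _) (by positivity) ?_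
  exact TriangleFreeColoring.card_filter_unused_lt_le hreg hG degree_le v hδ0.le hδ1.le
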